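/- Fix an integer p ≥ 2 and 0 ≤ α ≤ p−1. Then the Besicovitch set E̲(α) = {x ∈ [0,1] : A̲(x) ≥ α} has Hausdorff dimension 1 if 0 ≤ α < (p−1)/2, and Hausdorff dimension h(α) if (p−1)/2 ≤ α ≤ p−1. -/

import Mathlib

open Filter MeasureTheory Set
open scoped ENNReal

noncomputable section

/-- Number of words of length `n` over the alphabet `{0, …, p-1}` whose digit sum lies
strictly between `n(α-δ)` and `n(α+δ)`; this is `h(α,n,δ)`. -/
def hcount (p n : ℕ) (α δ : ℝ) : ℕ :=
  Nat.card {w : Fin n → Fin p //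
    (n : ℝ) * (α - δ) < ∑ i, ((w i : ℕ) : ℝ) ∧ (∑ i, ((w i : ℕ) : ℝ)) < n * (α + δ)}

/-- The `p`-adic entropy function
`h(α) = lim_{δ→0} limsup_{n→∞} log h(α,n,δ) / (n log p)`.
Since the inner quantity is nondecreasing in `δ`, the limit as `δ → 0⁺` equals the
infimum over `δ > 0`. -/
def entropy (p : ℕ) (α : ℝ) : ℝ :=
  ⨅ δ : {δ : ℝ // 0 < δ},
    limsup (fun n : ℕ => Real.log (hcount p n α δ) / (n * Real.log p)) atTop

/-- Number of words of length `n` over `{0, …, p-1}` with digit sum `< n(α+δ)`;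
this is `h̄(α,n,δ)`. -/
def hbarCount (p n : ℕ) (α δ : ℝ) : ℕ :=
  Nat.card {w : Fin n → Fin p // (∑ i, ((w i : ℕ) : ℝ)) < n * (α + δ)}

/-- The `p`-adic upper entropy function
`h̄(α) = lim_{δ→0} limsup_{n→∞} log h̄(α,n,δ) / (n log p)`, the limit in `δ`
being the infimum over `δ > 0` by monotonicity in `δ`. -/
def upperEntropy (p : ℕ) (α : ℝ) : ℝ :=
  ⨅ δ : {δ : ℝ // 0 < δ},
    limsup (fun n : ℕ => Real.log (hbarCount p n α δ) / (n * Real.log p)) atTop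

/-- Number of words of length `n` over `{0, …, p-1}` with digit sum `> n(α-δ)`;
this is `h̲(α,n,δ)`. -/
def hlowCount (p n : ℕ) (α δ : ℝ) : ℕ :=
  Nat.card {w : Fin n → Fin p // (n : ℝ) * (α - δ) < ∑ i, ((w i : ℕ) : ℝ)}

/-- The `p`-adic lower entropy function
`h̲(α) = lim_{δ→0} liminf_{n→∞} log h̲(α,n,δ) / (n log p)`, the limit in `δ`
being the infimum over `δ > 0` by monotonicity in `δ`. -/
def lowerEntropy (p : ℕ) (α : ℝ) : ℝ :=
  ⨅ δ : {δ : ℝ // 0 < δ},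
    liminf (fun n : ℕ => Real.log (hlowCount p n α δ) / (n * Real.log p)) atTop

/-- The `(n+1)`-th digit `x_{n+1} ∈ {0,…,p-1}` of the non-terminating `p`-adic expansion
`x = 0.x₁x₂x₃…` of `x ∈ [0,1]` (the expansion not ending in all zeros). -/
def padicDigit (p : ℕ) (x : ℝ) (n : ℕ) : ℤ :=
  (⌈x * p ^ (n + 1)⌉ - 1) - p * (⌈x * p ^ n⌉ - 1)

/-- `S_n(T^m x) = x_{m+1} + ⋯ + x_{m+n}`, the digit sum of length `n` after shifting
`m` times. In particular `msum p x 0 n = S_n(x)`. -/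
def msum (p : ℕ) (x : ℝ) (m n : ℕ) : ℤ :=
  ∑ i ∈ Finset.range n, padicDigit p x (m + i)

/-- The `n`-th lower moving digit mean `M̲ₙ(x) = liminf_{m→∞} S_n(T^m x)/n`. -/
def lowerMn (p : ℕ) (x : ℝ) (n : ℕ) : ℝ :=
  liminf (fun m : ℕ => (msum p x m n : ℝ) / n) atTop

/-- The `n`-th upper moving digit mean `M̄ₙ(x) = limsup_{m→∞} S_n(T^m x)/n`. -/
def upperMn (p : ℕ) (x : ℝ) (n : ℕ) : ℝ :=
  limsup (fun m : ℕ => (msum p x m n : ℝ) / n) atTop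

/-- The lower moving digit mean `M̲(x) = lim_{n→∞} M̲ₙ(x)`; the limit exists by
subadditivity, hence equals the `liminf`. -/
def lowerM (p : ℕ) (x : ℝ) : ℝ := liminf (fun n : ℕ => lowerMn p x n) atTop

/-- The upper moving digit mean `M̄(x) = lim_{n→∞} M̄ₙ(x)`; the limit exists by
subadditivity, hence equals the `limsup`. -/
def upperM (p : ℕ) (x : ℝ) : ℝ := limsup (fun n : ℕ => upperMn p x n) atTop

/-- The lower digit mean `A̲(x) = liminf_{n→∞} S_n(x)/n`. -/
def lowerA (p : ℕ) (x : ℝ) : ℝ := liminf (fun n : ℕ => (msum p x 0 n : ℝ) / n) atTop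

/-- The upper digit mean `Ā(x) = limsup_{n→∞} S_n(x)/n`. -/
def upperA (p : ℕ) (x : ℝ) : ℝ := limsup (fun n : ℕ => (msum p x 0 n : ℝ) / n) atTop

/-- The Banach set `B(α,β) = {x ∈ [0,1] : M̲(x) = α, M̄(x) = β}`. -/
def BanachSet (p : ℕ) (α β : ℝ) : Set ℝ :=
  {x | x ∈ Icc (0 : ℝ) 1 ∧ lowerM p x = α ∧ upperM p x = β}

/-- The Besicovitch set `E̲(α) = {x ∈ [0,1] : A̲(x) ≥ α}`. -/
def besicovitchLower (p : ℕ) (α : ℝ) : Set ℝ :=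
  {x | x ∈ Icc (0 : ℝ) 1 ∧ α ≤ lowerA p x}

/-!
Both dimension bounds are read off from the Gibbs measures of the digit function: under the tilt
`t`, the digits are independent with weights proportional to `exp (t k)`, and a `p`-adic interval
of order `n` with digit sum `S` has measure `exp (t S - n P(t))`, where `P` is the pressure. On
sequences with digit mean `α` this decays at the rate `P(t) - t α`. If `α` is the mean of the tilted
digit, such sequences have full measure by the law of large numbers, so the mass distribution
principle bounds the dimension from below by `(P(t) - t α) / log p`. For `t ≥ 0`, Chernoff's
inequality shows that at most `exp (n (P(t) - t α) + o(n))` words have digit sum at least about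
`n α`, which gives the same upper bound for `E̲(α)` and for `h(α)`. Finally, the words counted by
`h(α)` cover the level set of digit mean `α`, hence `h(α)` is at least its dimension, and all these
quantities coincide.

A tilt `t ≥ 0` with mean `α` exists when `(p-1)/2 ≤ α < p-1`. Below `(p-1)/2` the untilted measure
suffices, and at `α = p-1` everything vanishes in the limit `t → ∞`.
-/

open scoped Topology NNReal

section GeometricScales

lemma measure_le_mul_ediam_rpow {X : Type*} [PseudoEMetricSpace X] [MeasurableSpace X]
    {μ : Measure X} {r : ℝ≥0} (hr0 : 0 < r) (hr1 : r < 1) {d : ℝ} (hd : 0 ≤ d)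
    {C : ℝ≥0∞} (hC : C ≠ ⊤) {N : ℕ}
    (h : ∀ n ≥ N, ∀ A, Metric.ediam A ≤ (r : ℝ≥0∞) ^ n → μ A ≤ C * ((r : ℝ≥0∞) ^ n) ^ d)
    {A : Set X} (hA : Metric.ediam A ≤ (r : ℝ≥0∞) ^ (N + 1)) :
    μ A ≤ C * ((r : ℝ≥0∞) ^ d)⁻¹ * Metric.ediam A ^ d := by
  rcases eq_or_ne (Metric.ediam A) 0 with hA0 | hA0
  · have hlim : Tendsto (fun n : ℕ => C * ((r : ℝ≥0∞) ^ n) ^ d) atTop (𝓝 (C * 0 ^ d)) :=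
      ENNReal.Tendsto.const_mul ((ENNReal.tendsto_pow_atTop_nhds_zero_of_lt_one
        (by exact_mod_cast hr1)).ennrpow_const d) (Or.inr hC)
    have hzero : μ A ≤ C * 0 ^ d :=
      ge_of_tendsto hlim ((eventually_ge_atTop N).mono fun n hn => h n hn A (by simp [hA0]))
    have hone : 1 ≤ ((r : ℝ≥0∞) ^ d)⁻¹ :=
      ENNReal.one_le_inv.2 (ENNReal.rpow_le_one (by exact_mod_cast hr1.le) hd)
    rw [hA0]
    exact hzero.trans (by gcongr; exact le_mul_of_one_le_right' hone)
  · have hAtop : Metric.ediam A ≠ ⊤ := ne_top_of_le_ne_top (by finiteness) hA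
    lift Metric.ediam A to ℝ≥0 using hAtop with a ha
    norm_cast at hA hA0
    obtain ⟨n, hlt, hle⟩ := exists_nat_pow_near_of_lt_one (pos_iff_ne_zero.2 hA0)
      (hA.trans (pow_le_one₀ hr0.le hr1.le)) hr0 hr1
    have hNn : N ≤ n := by
      have := (pow_lt_pow_iff_right_of_lt_one₀ hr0 hr1).1 (hlt.trans_le hA)
      omega
    calc μ A ≤ C * ((r : ℝ≥0∞) ^ n) ^ d := h n hNn A (by rw [← ha]; exact_mod_cast hle)
      _ = C * ((r : ℝ≥0∞) ^ d)⁻¹ * ((r : ℝ≥0∞) ^ (n + 1)) ^ d := by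
        rw [pow_succ, ENNReal.mul_rpow_of_nonneg _ _ hd, mul_assoc, mul_comm _ ((r : ℝ≥0∞) ^ d),
          ENNReal.inv_mul_cancel_left (by simp [hr0.ne']) (by simp [hd])]
      _ ≤ C * ((r : ℝ≥0∞) ^ d)⁻¹ * a ^ d := by
        gcongr
        exact_mod_cast hlt.le

variable {X : Type*} [EMetricSpace X] [MeasurableSpace X] [BorelSpace X]

lemma hausdorffMeasure_ne_zero_of_measure_le {μ : Measure X} {d : ℝ} {C ε : ℝ≥0∞} (hC : C ≠ ⊤)
    (hε : 0 < ε) (h : ∀ A, Metric.ediam A ≤ ε → μ A ≤ C * Metric.ediam A ^ d) {s : Set X}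
    (hs : μ s ≠ 0) : μH[d] s ≠ 0 := by
  have hle : (C + 1)⁻¹ • μ ≤ μH[d] := Measure.le_hausdorffMeasure d _ ε hε fun A hA => by
    rw [Measure.smul_apply, smul_eq_mul, ENNReal.inv_mul_le_iff (by simp) (by simp [hC])]
    exact (h A hA).trans (by gcongr; exact le_self_add)
  have hpos : ((C + 1)⁻¹ • μ) s ≠ 0 := by simp [hC, hs]
  exact fun h0 => hpos (le_antisymm ((hle s).trans_eq h0) zero_le)

lemma hausdorffMeasure_ne_zero_of_geometric_scales {μ : Measure X} {r : ℝ≥0} (hr0 : 0 < r)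
    (hr1 : r < 1) {d : ℝ} (hd : 0 ≤ d) {C : ℝ≥0∞} (hC : C ≠ ⊤) {N : ℕ}
    (h : ∀ n ≥ N, ∀ A, Metric.ediam A ≤ (r : ℝ≥0∞) ^ n → μ A ≤ C * ((r : ℝ≥0∞) ^ n) ^ d)
    {s : Set X} (hs : μ s ≠ 0) : μH[d] s ≠ 0 :=
  hausdorffMeasure_ne_zero_of_measure_le (C := C * ((r : ℝ≥0∞) ^ d)⁻¹)
    (ENNReal.mul_ne_top hC (by simp [hr0.ne']))
    (ENNReal.pow_pos (by exact_mod_cast hr0) (N + 1))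
    (fun A hA => measure_le_mul_ediam_rpow hr0 hr1 hd hC h hA) hs

lemma hausdorffMeasure_le_of_geometric_covers {r : ℝ≥0∞} (hr : r < 1) {d : ℝ} (hd : 0 ≤ d)
    {C : ℝ≥0∞} {ι : ℕ → Type*} [∀ n, Fintype (ι n)] {T : ∀ n, ι n → Set X} {s : Set X}
    (hT : ∀ᶠ n in atTop, ∀ i, Metric.ediam (T n i) ≤ r ^ n)
    (hs : ∀ᶠ n in atTop, s ⊆ ⋃ i, T n i)
    (hcard : ∀ᶠ n in atTop, Fintype.card (ι n) * (r ^ n) ^ d ≤ C) : μH[d] s ≤ C := by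
  refine (Measure.hausdorffMeasure_le_liminf_sum d s (fun n => r ^ n)
    (ENNReal.tendsto_pow_atTop_nhds_zero_of_lt_one hr) T hT hs).trans
    (liminf_le_of_frequently_le' (Eventually.frequently ?_))
  filter_upwards [hT, hcard] with n hTn hn
  calc ∑ i, Metric.ediam (T n i) ^ d ≤ ∑ _i : ι n, (r ^ n) ^ d := by
        gcongr with i
        exact hTn i
    _ ≤ C := by simpa using hn

end GeometricScales

section DigitExpansion

variable {b : ℕ}

/-- The integer with base-`b` digits `ω 0, …, ω (n-1)`, most significant first. It names the
`b`-adic interval of length `b⁻ⁿ` in which the point coded by `ω` lies. -/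
def prefixValue (ω : ℕ → Fin b) : ℕ → ℕ
  | 0 => 0
  | n + 1 => b * prefixValue ω n + ω n

lemma mem_cylinder_of_prefixValue_eq {ω ω' : ℕ → Fin b} {n : ℕ}
    (h : prefixValue ω n = prefixValue ω' n) : ω ∈ PiNat.cylinder ω' n := by
  induction n with
  | zero => simp
  | succ n ih =>
    simp only [prefixValue] at h
    have hlast : (ω n : ℕ) = ω' n := by
      simpa [Nat.mul_add_mod, Nat.mod_eq_of_lt] using congrArg (· % b) h
    have hinit : prefixValue ω n = prefixValue ω' n :=
      Nat.eq_of_mul_eq_mul_left (Fin.pos (ω 0)) (by omega)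
    intro i hi
    rcases Nat.lt_succ_iff_lt_or_eq.1 hi with hi | rfl
    · exact ih hinit i hi
    · exact Fin.ext hlast

lemma ofDigits_mul_pow (ω : ℕ → Fin b) (n : ℕ) :
    Real.ofDigits ω * (b : ℝ) ^ n = prefixValue ω n + Real.ofDigits fun i => ω (i + n) := by
  have hb : (b : ℝ) ≠ 0 := by exact_mod_cast (Fin.pos (ω 0)).ne'
  have hsum : (∑ i ∈ Finset.range n, Real.ofDigitsTerm ω i) * (b : ℝ) ^ n = prefixValue ω n := by
    induction n with
    | zero => simp [prefixValue]
    | succ n ih =>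
      rw [Finset.sum_range_succ, add_mul, pow_succ, ← mul_assoc, ih, Real.ofDigitsTerm, prefixValue]
      push_cast
      field_simp
      ring
  rw [Real.ofDigits_eq_sum_add_ofDigits ω n, add_mul, hsum]
  field_simp

lemma ofDigits_mul_pow_mem_Icc (ω : ℕ → Fin b) (n : ℕ) :
    Real.ofDigits ω * (b : ℝ) ^ n ∈ Icc (prefixValue ω n : ℝ) (prefixValue ω n + 1) := by
  rw [ofDigits_mul_pow]
  exact ⟨le_add_of_nonneg_right (Real.ofDigits_nonneg _), by gcongr; exact Real.ofDigits_le_one _⟩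

lemma prefixValue_le_add_two {ω ω' : ℕ → Fin b} {n : ℕ}
    (h : |Real.ofDigits ω - Real.ofDigits ω'| ≤ ((b : ℝ) ^ n)⁻¹) :
    prefixValue ω n ≤ prefixValue ω' n + 2 := by
  have hb : (0 : ℝ) < (b : ℝ) ^ n := pow_pos (by exact_mod_cast Fin.pos (ω 0)) n
  have hdiff : (Real.ofDigits ω - Real.ofDigits ω') * (b : ℝ) ^ n ≤ 1 :=
    (le_mul_inv_iff₀ hb).1 (by simpa using (le_abs_self _).trans h)
  have hω := (ofDigits_mul_pow_mem_Icc ω n).1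
  have hω' := (ofDigits_mul_pow_mem_Icc ω' n).2
  rw [sub_mul] at hdiff
  have : (prefixValue ω n : ℝ) ≤ prefixValue ω' n + 2 := by linarith
  exact_mod_cast this

lemma ofDigits_pos {ω : ℕ → Fin b} {i : ℕ} (hi : (ω i : ℕ) ≠ 0) : 0 < Real.ofDigits ω := by
  have hb : (0 : ℝ) < b := by exact_mod_cast Fin.pos (ω 0)
  have hωi : (0 : ℝ) < (ω i : ℕ) := by exact_mod_cast Nat.pos_of_ne_zero hi
  refine Real.summable_ofDigitsTerm.tsum_pos (fun _ => Real.ofDigitsTerm_nonneg) i ?_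
  exact mul_pos hωi (inv_pos.2 (pow_pos hb _))

lemma padicDigit_ofDigits {ω : ℕ → Fin b} (hω : ∃ᶠ i in atTop, (ω i : ℕ) ≠ 0) (n : ℕ) :
    padicDigit b (Real.ofDigits ω) n = (ω n : ℕ) := by
  have hceil : ∀ n, ⌈Real.ofDigits ω * (b : ℝ) ^ n⌉ = prefixValue ω n + 1 := by
    intro n
    obtain ⟨i, hni, hi⟩ := (frequently_atTop.1 hω) n
    have htail : 0 < Real.ofDigits fun i => ω (i + n) :=
      ofDigits_pos (i := i - n) (by rwa [Nat.sub_add_cancel hni])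
    have hmem := ofDigits_mul_pow_mem_Icc ω n
    rw [Int.ceil_eq_iff]
    push_cast
    exact ⟨by rw [ofDigits_mul_pow]; linarith, hmem.2⟩
  rw [padicDigit, hceil, hceil, prefixValue]
  push_cast
  ring

lemma padicDigit_nonneg [NeZero b] (x : ℝ) (n : ℕ) : 0 ≤ padicDigit b x n := by
  have hb : (0 : ℝ) < b := by exact_mod_cast NeZero.pos b
  have : (b : ℤ) * (⌈x * b ^ n⌉ - 1) < ⌈x * (b : ℝ) ^ (n + 1)⌉ := by
    rw [Int.lt_ceil, pow_succ]
    push_cast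
    linarith [mul_lt_mul_of_pos_left (Int.ceil_lt_add_one (x * (b : ℝ) ^ n)) hb]
  rw [padicDigit]
  omega

lemma padicDigit_lt [NeZero b] (x : ℝ) (n : ℕ) : padicDigit b x n < b := by
  have hb : (0 : ℝ) < b := by exact_mod_cast NeZero.pos b
  have : ⌈x * (b : ℝ) ^ (n + 1)⌉ ≤ (b : ℤ) * ⌈x * b ^ n⌉ := by
    rw [Int.ceil_le, pow_succ]
    push_cast
    linarith [mul_le_mul_of_nonneg_left (Int.le_ceil (x * (b : ℝ) ^ n)) hb.le]
  rw [padicDigit, mul_sub]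
  omega

/-- The sequence of non-terminating base-`b` digits of `x`, that is `padicDigit` with values in
`Fin b`. -/
def padicDigits (b : ℕ) [NeZero b] (x : ℝ) (i : ℕ) : Fin b :=
  ⟨(padicDigit b x i).toNat,
    (Int.toNat_lt (padicDigit_nonneg x i)).2 (padicDigit_lt x i)⟩

lemma coe_padicDigits [NeZero b] (x : ℝ) (i : ℕ) :
    ((padicDigits b x i : ℕ) : ℤ) = padicDigit b x i :=
  Int.toNat_of_nonneg (padicDigit_nonneg x i)

lemma msum_zero_eq_sum_padicDigits [NeZero b] (x : ℝ) (n : ℕ) :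
    (msum b x 0 n : ℝ) = ∑ i ∈ Finset.range n, ((padicDigits b x i : ℕ) : ℝ) := by
  simp [msum, ← coe_padicDigits]

lemma prefixValue_padicDigits [NeZero b] {x : ℝ} (hx : x ∈ Ioc (0 : ℝ) 1) (n : ℕ) :
    (prefixValue (padicDigits b x) n : ℤ) = ⌈x * (b : ℝ) ^ n⌉ - 1 := by
  induction n with
  | zero =>
    have : ⌈x⌉ = 1 := Int.ceil_eq_iff.2 (by simpa using hx)
    simp [prefixValue, this]
  | succ n ih =>
    rw [prefixValue]
    push_cast
    rw [ih, coe_padicDigits, padicDigit]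
    ring

lemma ofDigits_padicDigits (hb : 1 < b) [NeZero b] {x : ℝ} (hx : x ∈ Ioc (0 : ℝ) 1) :
    Real.ofDigits (padicDigits b x) = x := by
  have hclose : ∀ n : ℕ, |Real.ofDigits (padicDigits b x) - x| ≤ ((b : ℝ) ^ n)⁻¹ := by
    intro n
    have hbn : (0 : ℝ) < (b : ℝ) ^ n := pow_pos (by exact_mod_cast NeZero.pos b) n
    have hmem := ofDigits_mul_pow_mem_Icc (padicDigits b x) n
    have hval : (prefixValue (padicDigits b x) n : ℝ) = ⌈x * (b : ℝ) ^ n⌉ - 1 := by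
      exact_mod_cast prefixValue_padicDigits hx n
    have hlt := Int.ceil_lt_add_one (x * (b : ℝ) ^ n)
    have hle := Int.le_ceil (x * (b : ℝ) ^ n)
    rw [hval] at hmem
    rw [← one_div, le_div_iff₀ hbn, ← abs_of_pos hbn, ← abs_mul, sub_mul, abs_le]
    constructor <;> linarith [hmem.1, hmem.2]
  have hlim : Tendsto (fun n : ℕ => ((b : ℝ) ^ n)⁻¹) atTop (𝓝 0) :=
    (tendsto_pow_atTop_atTop_of_one_lt (by exact_mod_cast hb)).inv_tendsto_atTop
  exact sub_eq_zero.1 (abs_nonpos_iff.1 (ge_of_tendsto' hlim hclose))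

end DigitExpansion

section HausdorffDimension

variable {b : ℕ}

lemma coe_inv_pow_rpow (hb : b ≠ 0) (n : ℕ) (d : ℝ) :
    ((((b : ℝ≥0)⁻¹ : ℝ≥0) : ℝ≥0∞) ^ n) ^ d = (b : ℝ≥0∞) ^ (-(n * d)) := by
  rw [ENNReal.coe_inv (by exact_mod_cast hb), ENNReal.coe_natCast, ← ENNReal.rpow_natCast,
    ← ENNReal.rpow_mul, ENNReal.inv_rpow, ← ENNReal.rpow_neg]

lemma coe_inv_lt_one (hb : 1 < b) : (b : ℝ≥0)⁻¹ < 1 :=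
  inv_lt_one_of_one_lt₀ (by exact_mod_cast hb)

lemma edist_le_coe_inv_pow_iff {x y : ℝ} {n : ℕ} :
    edist x y ≤ (((b : ℝ≥0)⁻¹ : ℝ≥0) : ℝ≥0∞) ^ n ↔ |x - y| ≤ ((b : ℝ) ^ n)⁻¹ := by
  rw [edist_nndist, ← ENNReal.coe_pow, ENNReal.coe_le_coe, ← NNReal.coe_le_coe, coe_nndist,
    Real.dist_eq]
  simp

lemma ediam_image_ofDigits_le (ω : ℕ → Fin b) (n : ℕ) :
    Metric.ediam (Real.ofDigits '' PiNat.cylinder ω n) ≤ ((b : ℝ≥0)⁻¹ : ℝ≥0) ^ n := by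
  refine Metric.ediam_le ?_
  rintro _ ⟨ω₁, h₁, rfl⟩ _ ⟨ω₂, h₂, rfl⟩
  exact edist_le_coe_inv_pow_iff.2
    (Real.abs_ofDigits_sub_ofDigits_le fun i hi => (h₁ i hi).trans (h₂ i hi).symm)

lemma dimH_image_ofDigits_le (hb : 1 < b) {S : Set (ℕ → Fin b)} {W : ∀ n, Set (Fin n → Fin b)}
    {d : ℝ≥0} (hS : ∀ ω ∈ S, ∀ᶠ n in atTop, (fun i : Fin n => ω i) ∈ W n)
    (hW : ∀ᶠ n in atTop, ((W n).ncard : ℝ≥0∞) ≤ (b : ℝ≥0∞) ^ (n * d : ℝ)) :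
    dimH (Real.ofDigits '' S) ≤ d := by
  have hfix : ∀ N : ℕ,
      dimH (Real.ofDigits '' {ω | ∀ n ≥ N, (fun i : Fin n => ω i) ∈ W n}) ≤ d := by
    intro N
    have (n : ℕ) : Fintype (W n) := Fintype.ofFinite _
    refine dimH_le_of_hausdorffMeasure_ne_top (ne_top_of_le_ne_top ENNReal.one_ne_top
      (hausdorffMeasure_le_of_geometric_covers (r := ((b : ℝ≥0)⁻¹ : ℝ≥0))
        (T := fun n (w : W n) => Real.ofDigits '' {ω | (fun i : Fin n => ω i) = w.1})
        (by exact_mod_cast coe_inv_lt_one hb) d.coe_nonneg (.of_forall fun n w => ?_) ?_ ?_))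
    · rcases eq_empty_or_nonempty {ω : ℕ → Fin b | (fun i : Fin n => ω i) = w.1} with he | ⟨ω₀, h₀⟩
      · simp [he]
      · refine (Metric.ediam_mono (image_mono fun ω hω i hi => ?_)).trans
          (ediam_image_ofDigits_le ω₀ n)
        exact congrFun (hω.trans h₀.symm) ⟨i, hi⟩
    · filter_upwards [eventually_ge_atTop N] with n hn
      rintro _ ⟨ω, hω, rfl⟩
      exact mem_iUnion.2 ⟨⟨_, hω n hn⟩, mem_image_of_mem _ rfl⟩
    · filter_upwards [hW] with n hn
      rw [coe_inv_pow_rpow (by omega), ENNReal.rpow_neg, ← Nat.card_eq_fintype_card,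
        Nat.card_coe_set_eq, ← div_eq_mul_inv]
      exact ENNReal.div_le_of_le_mul (by simpa using hn)
  have hcover : Real.ofDigits '' S ⊆
      ⋃ N : ℕ, Real.ofDigits '' {ω | ∀ n ≥ N, (fun i : Fin n => ω i) ∈ W n} := by
    rintro _ ⟨ω, hω, rfl⟩
    obtain ⟨N, hN⟩ := eventually_atTop.1 (hS ω hω)
    exact mem_iUnion.2 ⟨N, mem_image_of_mem _ hN⟩
  exact (dimH_mono hcover).trans ((dimH_iUnion _).trans_le (iSup_le hfix))

lemma measure_le_of_abs_ofDigits_sub_le {μ : Measure (ℕ → Fin b)} {B : Set (ℕ → Fin b)} {n : ℕ}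
    {c : ℝ≥0∞} (hμ : ∀ ω ∈ B, μ (PiNat.cylinder ω n) ≤ c)
    (hB : ∀ ω ∈ B, ∀ ω' ∈ B, |Real.ofDigits ω - Real.ofDigits ω'| ≤ ((b : ℝ) ^ n)⁻¹) :
    μ B ≤ 5 * c := by
  rcases B.eq_empty_or_nonempty with rfl | ⟨ω₀, h₀⟩
  · simp
  have hcover : B ⊆ ⋃ v ∈ Finset.Icc (prefixValue ω₀ n - 2) (prefixValue ω₀ n + 2),
      {ω ∈ B | prefixValue ω n = v} := by
    intro ω hω
    simp only [mem_iUnion]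
    refine ⟨prefixValue ω n, Finset.mem_Icc.2 ⟨?_, ?_⟩, hω, rfl⟩
    · exact Nat.sub_le_of_le_add (prefixValue_le_add_two (hB ω₀ h₀ ω hω))
    · exact prefixValue_le_add_two (hB ω hω ω₀ h₀)
  have hpiece : ∀ v, μ {ω ∈ B | prefixValue ω n = v} ≤ c := by
    intro v
    rcases eq_empty_or_nonempty {ω ∈ B | prefixValue ω n = v} with he | ⟨ω₁, h₁, hv⟩
    · simp [he]
    · exact (measure_mono fun ω hω => mem_cylinder_of_prefixValue_eq (hω.2.trans hv.symm)).trans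
        (hμ ω₁ h₁)
  calc μ B ≤ ∑ v ∈ Finset.Icc (prefixValue ω₀ n - 2) (prefixValue ω₀ n + 2),
        μ {ω ∈ B | prefixValue ω n = v} :=
        (measure_mono hcover).trans (measure_biUnion_finset_le _ _)
    _ ≤ (Finset.Icc (prefixValue ω₀ n - 2) (prefixValue ω₀ n + 2)).card • c :=
        Finset.sum_le_card_nsmul _ _ _ fun v _ => hpiece v
    _ ≤ 5 * c := by
        rw [nsmul_eq_mul, Nat.card_Icc]
        gcongr
        exact_mod_cast (by omega : prefixValue ω₀ n + 2 + 1 - (prefixValue ω₀ n - 2) ≤ 5)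

lemma le_dimH_image_ofDigits (hb : 1 < b) {μ : Measure (ℕ → Fin b)} {S : Set (ℕ → Fin b)}
    (hS : μ S ≠ 0) {d : ℝ≥0}
    (h : ∀ ω ∈ S, ∀ᶠ n in atTop, μ (PiNat.cylinder ω n) ≤ (b : ℝ≥0∞) ^ (-(n * d) : ℝ)) :
    d ≤ dimH (Real.ofDigits '' S) := by
  let G (N : ℕ) : Set (ℕ → Fin b) :=
    {ω ∈ S | ∀ n ≥ N, μ (PiNat.cylinder ω n) ≤ (b : ℝ≥0∞) ^ (-(n * d) : ℝ)}
  obtain ⟨N, hN⟩ : ∃ N, μ (G N) ≠ 0 := by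
    by_contra! hnull
    refine hS (measure_mono_null (fun ω hω => ?_) (measure_iUnion_null hnull))
    obtain ⟨N, hN⟩ := eventually_atTop.1 (h ω hω)
    exact mem_iUnion.2 ⟨N, hω, hN⟩
  have hmeas : Measurable (Real.ofDigits : (ℕ → Fin b) → ℝ) := Real.continuous_ofDigits.measurable
  have hscale : ∀ n ≥ N, ∀ A, Metric.ediam A ≤ (((b : ℝ≥0)⁻¹ : ℝ≥0) : ℝ≥0∞) ^ n →
      (μ.restrict (G N)).map Real.ofDigits A ≤
        5 * ((((b : ℝ≥0)⁻¹ : ℝ≥0) : ℝ≥0∞) ^ n) ^ (d : ℝ) := by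
    intro n hn A hA
    calc (μ.restrict (G N)).map Real.ofDigits A
        ≤ (μ.restrict (G N)).map Real.ofDigits (closure A) := measure_mono subset_closure
      _ = μ (Real.ofDigits ⁻¹' closure A ∩ G N) := by
        rw [Measure.map_apply hmeas isClosed_closure.measurableSet,
          Measure.restrict_apply (hmeas isClosed_closure.measurableSet)]
      _ ≤ 5 * ((((b : ℝ≥0)⁻¹ : ℝ≥0) : ℝ≥0∞) ^ n) ^ (d : ℝ) := by
        refine measure_le_of_abs_ofDigits_sub_le (n := n)
          (fun ω hω => (hω.2.2 n hn).trans_eq (coe_inv_pow_rpow (by omega) n d).symm)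
          fun ω hω ω' hω' => edist_le_coe_inv_pow_iff.1 ?_
        exact (Metric.edist_le_ediam_of_mem (mem_preimage.1 hω.1) (mem_preimage.1 hω'.1)).trans
          (by rwa [Metric.ediam_closure])
  have hpos : (μ.restrict (G N)).map Real.ofDigits (Real.ofDigits '' S) ≠ 0 := by
    refine fun h0 => hN (le_antisymm ?_ zero_le)
    calc μ (G N) = μ.restrict (G N) (G N) := (Measure.restrict_apply_self _ _).symm
      _ ≤ μ.restrict (G N) (Real.ofDigits ⁻¹' (Real.ofDigits '' S)) :=
        measure_mono fun ω hω => mem_image_of_mem _ hω.1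
      _ ≤ 0 := (Measure.le_map_apply hmeas.aemeasurable _).trans_eq h0
  exact le_dimH_of_hausdorffMeasure_ne_zero (hausdorffMeasure_ne_zero_of_geometric_scales
    (inv_pos.2 (by exact_mod_cast zero_lt_one.trans hb)) (coe_inv_lt_one hb) d.coe_nonneg
    (by finiteness) hscale hpos)

end HausdorffDimension

section GibbsWeights

lemma le_mul_exp_mul {t : ℝ} (ht : 0 ≤ t) (x : ℝ) : x ≤ x * Real.exp (t * x) := by
  rcases le_total 0 x with hx | hx
  · exact le_mul_of_one_le_right hx (Real.one_le_exp (by positivity))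
  · exact le_mul_of_le_one_right hx (Real.exp_le_one_iff.2 (mul_nonpos_of_nonneg_of_nonpos ht hx))

variable {ι : Type*} [Fintype ι] (f : ι → ℝ)

/-- The logarithm of the partition function `∑ exp (t f)`: the pressure of the potential `t f`. -/
def pressure (t : ℝ) : ℝ :=
  Real.log (∑ k, Real.exp (t * f k))

/-- The weights proportional to `exp (t f)`, normalised to have sum `1`. -/
def gibbsWeight (t : ℝ) (k : ι) : ℝ :=
  Real.exp (t * f k - pressure f t)

lemma gibbsWeight_nonneg (t : ℝ) (k : ι) : 0 ≤ gibbsWeight f t k :=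
  (Real.exp_pos _).le

/-- The mean of `f` under the weights `gibbsWeight f t`. -/
def gibbsMean (t : ℝ) : ℝ :=
  ∑ k, gibbsWeight f t k * f k

lemma pressure_zero : pressure f 0 = Real.log (Fintype.card ι) := by
  simp [pressure]

variable [Nonempty ι]

lemma exp_pressure (t : ℝ) : Real.exp (pressure f t) = ∑ k, Real.exp (t * f k) :=
  Real.exp_log (Finset.sum_pos (fun _ _ => Real.exp_pos _) Finset.univ_nonempty)

lemma sum_gibbsWeight (t : ℝ) : ∑ k, gibbsWeight f t k = 1 := by
  simp only [gibbsWeight, Real.exp_sub, ← Finset.sum_div, ← exp_pressure f t]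
  exact div_self (Real.exp_ne_zero _)

lemma gibbsMean_zero : gibbsMean f 0 = (∑ k, f k) / Fintype.card ι := by
  simp [gibbsMean, gibbsWeight, pressure_zero, Real.exp_neg, Real.exp_log, Fintype.card_pos,
    ← Finset.mul_sum, div_eq_inv_mul]

lemma mul_le_pressure (t : ℝ) (k : ι) : t * f k ≤ pressure f t := by
  rw [← Real.exp_le_exp, exp_pressure]
  exact Finset.single_le_sum (f := fun k => Real.exp (t * f k)) (fun _ _ => (Real.exp_pos _).le)
    (Finset.mem_univ k)

lemma tendsto_pressure_sub {m : ι} (hm : ∀ k ≠ m, f k < f m) :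
    Tendsto (fun t => pressure f t - t * f m) atTop (𝓝 0) := by
  classical
  have hterm : ∀ k, Tendsto (fun t => Real.exp (t * (f k - f m))) atTop
      (𝓝 (if k = m then 1 else 0)) := by
    intro k
    split_ifs with hk
    · simp [hk]
    · exact Real.tendsto_exp_atBot.comp
        (tendsto_id.atTop_mul_const_of_neg (sub_neg.2 (hm k hk)))
  have hsum : Tendsto (fun t => ∑ k, Real.exp (t * (f k - f m))) atTop (𝓝 1) := by
    simpa using tendsto_finsetSum Finset.univ fun k _ => hterm k
  rw [← Real.log_one]
  refine (hsum.log one_ne_zero).congr fun t => ?_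
  simp only [mul_sub, Real.exp_sub, ← Finset.sum_div, ← exp_pressure f t]
  rw [← Real.exp_sub, Real.log_exp]

lemma sum_sub_mul_exp_eq (a t : ℝ) :
    ∑ k, (f k - a) * Real.exp (t * (f k - a)) =
      Real.exp (pressure f t - t * a) * (gibbsMean f t - a) := by
  have hterm : ∀ k, (f k - a) * Real.exp (t * (f k - a)) =
      Real.exp (pressure f t - t * a) * (gibbsWeight f t k * f k - gibbsWeight f t k * a) := by
    intro k
    rw [← mul_sub, gibbsWeight, ← mul_assoc, ← Real.exp_add, mul_comm]
    congr 2
    ring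
  simp only [hterm, ← Finset.mul_sum, Finset.sum_sub_distrib, ← Finset.sum_mul, sum_gibbsWeight,
    one_mul, gibbsMean]

lemma exists_gibbsMean_eq {a : ℝ} (h0 : gibbsMean f 0 ≤ a) {m : ι} (hm : a < f m) :
    ∃ t, 0 ≤ t ∧ gibbsMean f t = a := by
  classical
  let g (t : ℝ) : ℝ := ∑ k, (f k - a) * Real.exp (t * (f k - a))
  have hg : ∀ t, g t = Real.exp (pressure f t - t * a) * (gibbsMean f t - a) :=
    sum_sub_mul_exp_eq f a
  have hg0 : g 0 ≤ 0 := by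
    rw [hg]
    exact mul_nonpos_of_nonneg_of_nonpos (Real.exp_pos _).le (sub_nonpos.2 h0)
  -- No term falls below its value at `0`, and the term at `m` gains at least `t * (f m - a) ^ 2`.
  have hgrowth : ∀ t, 0 ≤ t → g 0 + t * (f m - a) ^ 2 ≤ g t := by
    intro t ht
    have hterm : ∀ k, f k - a + (if k = m then t * (f m - a) ^ 2 else 0) ≤
        (f k - a) * Real.exp (t * (f k - a)) := by
      intro k
      split_ifs with hk
      · subst hk
        nlinarith [Real.add_one_le_exp (t * (f k - a)), sub_pos.2 hm]
      · simpa using le_mul_exp_mul ht (f k - a)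
    simpa [g, Finset.sum_add_distrib] using Finset.sum_le_sum fun k (_ : k ∈ Finset.univ) => hterm k
  have hT : 0 ≤ -g 0 / (f m - a) ^ 2 := div_nonneg (neg_nonneg.2 hg0) (sq_nonneg _)
  have hgT : 0 ≤ g (-g 0 / (f m - a) ^ 2) := by
    have := hgrowth _ hT
    rwa [div_mul_cancel₀ _ (pow_pos (sub_pos.2 hm) 2).ne', add_neg_cancel] at this
  obtain ⟨t, ht, hgt⟩ := intermediate_value_Icc hT
    (by fun_prop : Continuous g).continuousOn ⟨hg0, hgT⟩
  rw [hg, mul_eq_zero_iff_left (Real.exp_ne_zero _), sub_eq_zero] at hgt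
  exact ⟨t, ht.1, hgt⟩

lemma ncard_lt_sum_le (c : ℝ) {t : ℝ} (ht : 0 ≤ t) (n : ℕ) :
    ({w : Fin n → ι | c < ∑ i, f (w i)}.ncard : ℝ) ≤ Real.exp (n * pressure f t - t * c) := by
  classical
  rw [Set.ncard_eq_toFinset_card', Real.exp_sub, le_div_iff₀ (Real.exp_pos _), ← nsmul_eq_mul]
  calc _ ≤ ∑ w ∈ {w : Fin n → ι | c < ∑ i, f (w i)}.toFinset, Real.exp (t * ∑ i, f (w i)) := by
        refine Finset.card_nsmul_le_sum _ _ _ fun w hw => Real.exp_le_exp.2 ?_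
        exact mul_le_mul_of_nonneg_left (mem_toFinset.1 hw).le ht
    _ ≤ ∑ w : Fin n → ι, ∏ i, Real.exp (t * f (w i)) := by
        simp only [Finset.mul_sum, Real.exp_sum]
        exact Finset.sum_le_univ_sum_of_nonneg fun w => by positivity
    _ = Real.exp (n * pressure f t) := by
        rw [Real.exp_nat_mul, exp_pressure, Fintype.sum_pow]

end GibbsWeights

section Averages

variable {ι : Type*}

/-- Sequences along which the averages of `f` converge to `a`. -/
def averageLevelSet (f : ι → ℝ) (a : ℝ) : Set (ℕ → ι) :=
  {ω | Tendsto (fun n : ℕ => (∑ i ∈ Finset.range n, f (ω i)) / n) atTop (𝓝 a)}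

/-- Sequences along which the averages of `f` have lower limit at least `a`, expressed without
`liminf` so that no boundedness of the averages is presupposed. -/
def lowerAverageSet (f : ι → ℝ) (a : ℝ) : Set (ℕ → ι) :=
  {ω | ∀ a' < a, ∀ᶠ n : ℕ in atTop, n * a' < ∑ i ∈ Finset.range n, f (ω i)}

lemma eventually_abs_sum_sub_lt {f : ι → ℝ} {a δ : ℝ} {ω : ℕ → ι}
    (hω : ω ∈ averageLevelSet f a) (hδ : 0 < δ) :
    ∀ᶠ n : ℕ in atTop, |∑ i ∈ Finset.range n, f (ω i) - n * a| < n * δ := by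
  filter_upwards [Metric.tendsto_nhds.1 hω δ hδ, eventually_gt_atTop 0] with n hn hn0
  have hn0' : (0 : ℝ) < n := by exact_mod_cast hn0
  rwa [Real.dist_eq, div_sub' hn0'.ne', abs_div, abs_of_pos hn0', div_lt_iff₀' hn0'] at hn

end Averages

section GibbsMeasure

variable {ι : Type*} [Fintype ι] [Nonempty ι] (f : ι → ℝ)

/-- The probability mass function with weights `gibbsWeight f t`. -/
def gibbsPMF (t : ℝ) : PMF ι :=
  PMF.ofFintype (fun k => ENNReal.ofReal (gibbsWeight f t k)) (by
    rw [← ENNReal.ofReal_sum_of_nonneg fun k _ => gibbsWeight_nonneg f t k, sum_gibbsWeight,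
      ENNReal.ofReal_one])

variable [MeasurableSpace ι] [MeasurableSingletonClass ι]

/-- The law of a sequence of independent letters, each distributed according to `gibbsPMF f t`. -/
def gibbsMeasure (t : ℝ) : Measure (ℕ → ι) :=
  Measure.infinitePi fun _ => (gibbsPMF f t).toMeasure

instance (t : ℝ) : IsProbabilityMeasure (gibbsMeasure f t) := by
  unfold gibbsMeasure
  infer_instance

lemma gibbsMeasure_cylinder (t : ℝ) (ω : ℕ → ι) (n : ℕ) :
    gibbsMeasure f t (PiNat.cylinder ω n) = ENNReal.ofReal
      (Real.exp (t * ∑ i ∈ Finset.range n, f (ω i) - n * pressure f t)) := by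
  rw [PiNat.cylinder_eq_pi, gibbsMeasure, Measure.infinitePi_pi _ fun i _ => .singleton _]
  simp only [PMF.toMeasure_apply_singleton _ _ (MeasurableSet.singleton _), gibbsPMF,
    PMF.ofFintype_apply, gibbsWeight]
  rw [← ENNReal.ofReal_prod_of_nonneg fun i _ => (Real.exp_pos _).le, ← Real.exp_sum,
    Finset.sum_sub_distrib, Finset.mul_sum, Finset.sum_const, Finset.card_range, nsmul_eq_mul]

lemma integral_gibbsPMF (t : ℝ) : ∫ k, f k ∂(gibbsPMF f t).toMeasure = gibbsMean f t := by
  rw [PMF.integral_eq_sum]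
  refine Finset.sum_congr rfl fun k _ => ?_
  rw [gibbsPMF, PMF.ofFintype_apply, ENNReal.toReal_ofReal (gibbsWeight_nonneg f t k), smul_eq_mul]

lemma ae_mem_averageLevelSet (t : ℝ) :
    ∀ᵐ ω ∂gibbsMeasure f t, ω ∈ averageLevelSet f (gibbsMean f t) := by
  have hf : Measurable f := measurable_of_finite f
  have hindep : ProbabilityTheory.iIndepFun (fun (i : ℕ) (ω : ℕ → ι) => f (ω i))
      (gibbsMeasure f t) :=
    ProbabilityTheory.iIndepFun_infinitePi (X := fun (_ : ℕ) => f) fun _ => hf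
  have hmp (i : ℕ) : MeasurePreserving (fun ω : ℕ → ι => ω i) (gibbsMeasure f t)
      (gibbsPMF f t).toMeasure :=
    measurePreserving_eval_infinitePi (fun _ => (gibbsPMF f t).toMeasure) i
  have hident (i : ℕ) : ProbabilityTheory.IdentDistrib (fun ω : ℕ → ι => f (ω i))
      (fun ω => f (ω 0)) (gibbsMeasure f t) (gibbsMeasure f t) :=
    ProbabilityTheory.IdentDistrib.comp (u := f)
      ⟨(hmp i).measurable.aemeasurable, (hmp 0).measurable.aemeasurable,
        by rw [(hmp i).map_eq, (hmp 0).map_eq]⟩ hf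
  have hint : Integrable (fun ω : ℕ → ι => f (ω 0)) (gibbsMeasure f t) :=
    (hmp 0).integrable_comp_of_integrable (g := f) .of_finite
  have hmean : ∫ ω, f (ω 0) ∂gibbsMeasure f t = gibbsMean f t := by
    rw [← integral_gibbsPMF, ← (hmp 0).map_eq,
      integral_map (hmp 0).measurable.aemeasurable hf.aestronglyMeasurable]
  rw [← hmean]
  exact ProbabilityTheory.strong_law_ae_real _ hint (fun i j hij => hindep.indepFun hij) hident

lemma gibbsMeasure_averageLevelSet (t : ℝ) :
    gibbsMeasure f t (averageLevelSet f (gibbsMean f t)) = 1 :=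
  (measure_congr (eventuallyEq_univ.2 (ae_mem_averageLevelSet f t))).trans measure_univ

end GibbsMeasure

section DigitAverages

/-- The rate, in units of `log b`, at which the `gibbsMeasure f t` of cylinders decays along
sequences with average `a`; its infimum over `t` is the Legendre transform of the pressure. -/
def tiltedEntropy {b : ℕ} (f : Fin b → ℝ) (a t : ℝ) : ℝ :=
  (pressure f t - t * a) / Real.log b

variable {b : ℕ} (f : Fin b → ℝ)

lemma natCast_rpow_eq_ofReal_exp (hb : b ≠ 0) (y : ℝ) :
    (b : ℝ≥0∞) ^ y = ENNReal.ofReal (Real.exp (y * Real.log b)) := by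
  have hb' : (0 : ℝ) < b := by exact_mod_cast Nat.pos_of_ne_zero hb
  rw [← ENNReal.ofReal_natCast, ENNReal.ofReal_rpow_of_pos hb', Real.rpow_def_of_pos hb', mul_comm]

lemma ofReal_le_of_forall_nnreal {x : ℝ} {y : ℝ≥0∞}
    (h : ∀ d : ℝ≥0, d < x → (d : ℝ≥0∞) ≤ y) : ENNReal.ofReal x ≤ y :=
  ENNReal.le_of_forall_nnreal_lt fun d hd =>
    h d ((ENNReal.lt_ofReal_iff_toReal_lt ENNReal.coe_ne_top).1 hd)

lemma le_ofReal_of_forall_nnreal {x : ℝ} {y : ℝ≥0∞} (h : ∀ d : ℝ≥0, x < d → y ≤ d) :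
    y ≤ ENNReal.ofReal x := by
  by_contra! hlt
  obtain ⟨d, hxd, hdy⟩ := ENNReal.lt_iff_exists_nnreal_btwn.1 hlt
  exact hdy.not_ge (h d ((Real.le_coe_toNNReal x).trans_lt (ENNReal.coe_lt_coe.1 hxd)))

lemma tiltedEntropy_zero (hb : 1 < b) (a : ℝ) : tiltedEntropy f a 0 = 1 := by
  have hlog : 0 < Real.log b := Real.log_pos (by exact_mod_cast hb)
  simp [tiltedEntropy, pressure_zero, hlog.ne']

lemma le_dimH_image_averageLevelSet (hb : 1 < b) (t : ℝ) :
    ENNReal.ofReal (tiltedEntropy f (gibbsMean f t) t) ≤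
      dimH (Real.ofDigits '' averageLevelSet f (gibbsMean f t)) := by
  have : NeZero b := ⟨by omega⟩
  have hlog : 0 < Real.log b := Real.log_pos (by exact_mod_cast hb)
  refine ofReal_le_of_forall_nnreal fun d hd => le_dimH_image_ofDigits hb
    (by simp [gibbsMeasure_averageLevelSet] : gibbsMeasure f t _ ≠ 0) fun ω hω => ?_
  rw [tiltedEntropy, lt_div_iff₀ hlog] at hd
  obtain ⟨δ, hδ, htδ⟩ := exists_pos_mul_lt (sub_pos.2 hd) |t|
  filter_upwards [eventually_abs_sum_sub_lt hω hδ] with n hn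
  rw [gibbsMeasure_cylinder, natCast_rpow_eq_ofReal_exp (by omega)]
  gcongr
  have hsum : t * (∑ i ∈ Finset.range n, f (ω i) - n * gibbsMean f t) ≤ |t| * (n * δ) :=
    (le_abs_self _).trans (by rw [abs_mul]; gcongr)
  have := mul_le_mul_of_nonneg_left htδ.le n.cast_nonneg
  linarith

lemma dimH_image_lowerAverageSet_le (hb : 1 < b) (a : ℝ) {t : ℝ} (ht : 0 ≤ t) :
    dimH (Real.ofDigits '' lowerAverageSet f a) ≤ ENNReal.ofReal (tiltedEntropy f a t) := by
  have : NeZero b := ⟨by omega⟩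
  have hlog : 0 < Real.log b := Real.log_pos (by exact_mod_cast hb)
  refine le_ofReal_of_forall_nnreal fun d hd => ?_
  rw [tiltedEntropy, div_lt_iff₀ hlog] at hd
  obtain ⟨δ, hδ, htδ⟩ := exists_pos_mul_lt (sub_pos.2 hd) t
  refine dimH_image_ofDigits_le hb (W := fun n => {w | n * (a - δ) < ∑ i, f (w i)})
    (fun ω hω => ?_) (.of_forall fun n => ?_)
  · filter_upwards [hω (a - δ) (sub_lt_self a hδ)] with n hn
    simpa [Fin.sum_univ_eq_sum_range (fun i => f (ω i))] using hn
  · rw [natCast_rpow_eq_ofReal_exp (by omega), ← ENNReal.ofReal_natCast]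
    refine ENNReal.ofReal_le_ofReal ((ncard_lt_sum_le f _ ht n).trans (Real.exp_le_exp.2 ?_))
    have := mul_le_mul_of_nonneg_left htδ.le n.cast_nonneg
    linarith

end DigitAverages

section Besicovitch

variable {p : ℕ}

/-- The potential whose ergodic sums are the digit sums. -/
abbrev digitVal (p : ℕ) (k : Fin p) : ℝ :=
  (k : ℕ)

lemma digitVal_top [NeZero p] : digitVal p ⊤ = p - 1 := by
  rw [digitVal, Fin.val_top, Nat.cast_pred (NeZero.pos p)]

lemma gibbsMean_digitVal_zero [NeZero p] : gibbsMean (digitVal p) 0 = (p - 1) / 2 := by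
  have hsum : (∑ k, digitVal p k) * 2 = p * (p - 1) := by
    have hnat : (∑ k : Fin p, (k : ℕ)) * 2 = p * (p - 1) :=
      (Fin.sum_univ_eq_sum_range id p).symm ▸ Finset.sum_range_id_mul_two p
    have hreal := congrArg (Nat.cast (R := ℝ)) hnat
    push_cast [NeZero.one_le] at hreal
    exact hreal
  rw [gibbsMean_zero, Fintype.card_fin, div_eq_div_iff (NeZero.ne _) two_ne_zero, hsum, mul_comm]

lemma besicovitchLower_subset (hp : 1 < p) (a : ℝ) :
    besicovitchLower p a ⊆ {0} ∪ Real.ofDigits '' lowerAverageSet (digitVal p) a := by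
  have : NeZero p := ⟨by omega⟩
  rintro x ⟨hx, hax⟩
  rcases hx.1.eq_or_lt with rfl | hx0
  · exact Or.inl rfl
  refine Or.inr ⟨padicDigits p x, fun a' ha' => ?_, ofDigits_padicDigits hp ⟨hx0, hx.2⟩⟩
  have hbdd : IsBoundedUnder (· ≥ ·) atTop fun n : ℕ => (msum p x 0 n : ℝ) / n :=
    isBoundedUnder_of ⟨0, fun n => by rw [msum_zero_eq_sum_padicDigits]; positivity⟩
  filter_upwards [eventually_lt_of_lt_liminf (ha'.trans_le hax) hbdd, eventually_gt_atTop 0]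
    with n hn hn0
  rwa [msum_zero_eq_sum_padicDigits, lt_div_iff₀' (by exact_mod_cast hn0)] at hn

lemma dimH_besicovitchLower_le (hp : 1 < p) (a : ℝ) {t : ℝ} (ht : 0 ≤ t) :
    dimH (besicovitchLower p a) ≤ ENNReal.ofReal (tiltedEntropy (digitVal p) a t) := by
  refine (dimH_mono (besicovitchLower_subset hp a)).trans ?_
  rw [dimH_union, dimH_singleton]
  exact max_le zero_le (dimH_image_lowerAverageSet_le _ hp a ht)

lemma frequently_ne_zero_of_mem_averageLevelSet {a : ℝ} (ha : a ≠ 0) {ω : ℕ → Fin p}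
    (hω : ω ∈ averageLevelSet (digitVal p) a) : ∃ᶠ i in atTop, (ω i : ℕ) ≠ 0 := by
  by_contra hzero
  have hlim : Tendsto (fun n : ℕ => (n : ℝ)⁻¹ • ∑ i ∈ Finset.range n, digitVal p (ω i)) atTop
      (𝓝 0) := by
    refine Tendsto.cesaro_smul (tendsto_const_nhds.congr' ?_)
    filter_upwards [not_frequently.1 hzero] with i hi
    simp [digitVal, not_not.1 hi]
  refine ha (tendsto_nhds_unique hω (hlim.congr fun n => ?_))
  rw [smul_eq_mul, inv_mul_eq_div]

lemma image_averageLevelSet_subset_besicovitchLower {a : ℝ} (ha : a ≠ 0) :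
    Real.ofDigits '' averageLevelSet (digitVal p) a ⊆ besicovitchLower p a := by
  rintro _ ⟨ω, hω, rfl⟩
  refine ⟨⟨Real.ofDigits_nonneg ω, Real.ofDigits_le_one ω⟩, le_of_eq ?_⟩
  have hdigit := padicDigit_ofDigits (frequently_ne_zero_of_mem_averageLevelSet ha hω)
  simp only [lowerA, msum, zero_add, hdigit]
  push_cast
  exact hω.liminf_eq.symm

lemma le_dimH_besicovitchLower (hp : 1 < p) {t : ℝ} (ht : gibbsMean (digitVal p) t ≠ 0) :
    ENNReal.ofReal (tiltedEntropy (digitVal p) (gibbsMean (digitVal p) t) t) ≤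
      dimH (besicovitchLower p (gibbsMean (digitVal p) t)) :=
  (le_dimH_image_averageLevelSet _ hp t).trans
    (dimH_mono (image_averageLevelSet_subset_besicovitchLower ht))

end Besicovitch

section Entropy

variable {p : ℕ} {a : ℝ}

lemma hcount_eq_ncard (n : ℕ) (δ : ℝ) : hcount p n a δ =
    {w : Fin n → Fin p | |∑ i, digitVal p (w i) - n * a| < n * δ}.ncard := by
  rw [hcount, ← Nat.card_coe_set_eq]
  refine Nat.card_congr (Equiv.subtypeEquivRight fun w => ?_)
  rw [mem_ofPred_eq, abs_sub_lt_iff]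
  constructor <;> rintro ⟨h₁, h₂⟩ <;> constructor <;> linarith

lemma log_hcount_div_le (hp : 1 < p) (ha : a ≤ p - 1) {δ : ℝ} (hδ : 0 ≤ δ) {t : ℝ} (ht : 0 ≤ t)
    (n : ℕ) :
    Real.log (hcount p n a δ) / (n * Real.log p) ≤ tiltedEntropy (digitVal p) (a - δ) t := by
  have : NeZero p := ⟨by omega⟩
  have hlog : 0 < Real.log p := Real.log_pos (by exact_mod_cast hp)
  have hnonneg : 0 ≤ pressure (digitVal p) t - t * (a - δ) := by
    have := mul_le_pressure (digitVal p) t (⊤)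
    rw [digitVal_top] at this
    nlinarith
  rw [tiltedEntropy, ← div_div]
  gcongr
  refine div_le_of_le_mul₀ n.cast_nonneg hnonneg ?_
  rcases (hcount p n a δ).eq_zero_or_pos with h0 | hpos
  · simpa [h0] using mul_nonneg hnonneg n.cast_nonneg
  rw [Real.log_le_iff_le_exp (by exact_mod_cast hpos)]
  calc (hcount p n a δ : ℝ)
      ≤ {w : Fin n → Fin p | n * (a - δ) < ∑ i, digitVal p (w i)}.ncard := by
        rw [hcount_eq_ncard, Nat.cast_le]
        refine ncard_le_ncard fun w hw => ?_
        rw [mem_ofPred_eq] at hw ⊢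
        linarith [(abs_lt.1 hw).1]
    _ ≤ _ := ncard_lt_sum_le _ _ ht n
    _ = Real.exp ((pressure (digitVal p) t - t * (a - δ)) * n) := by ring_nf

lemma isBoundedUnder_le_log_hcount_div (hp : 1 < p) (ha : a ≤ p - 1) {δ : ℝ} (hδ : 0 ≤ δ) :
    IsBoundedUnder (· ≤ ·) atTop fun n : ℕ => Real.log (hcount p n a δ) / (n * Real.log p) :=
  isBoundedUnder_of ⟨_, log_hcount_div_le hp ha hδ le_rfl⟩

lemma isBoundedUnder_ge_log_hcount_div (δ : ℝ) :
    IsBoundedUnder (· ≥ ·) atTop fun n : ℕ => Real.log (hcount p n a δ) / (n * Real.log p) :=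
  isBoundedUnder_of ⟨0, fun n => by positivity⟩

lemma limsup_log_hcount_div_nonneg (hp : 1 < p) (ha : a ≤ p - 1) {δ : ℝ} (hδ : 0 ≤ δ) :
    0 ≤ limsup (fun n : ℕ => Real.log (hcount p n a δ) / (n * Real.log p)) atTop :=
  le_limsup_of_frequently_le (.of_forall fun n => by positivity)
    (isBoundedUnder_le_log_hcount_div hp ha hδ)

lemma entropy_nonneg (hp : 1 < p) (ha : a ≤ p - 1) : 0 ≤ entropy p a :=
  Real.iInf_nonneg fun δ => limsup_log_hcount_div_nonneg hp ha δ.2.le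

lemma entropy_le_tiltedEntropy (hp : 1 < p) (ha : a ≤ p - 1) {t : ℝ} (ht : 0 ≤ t) :
    entropy p a ≤ tiltedEntropy (digitVal p) a t := by
  have hδ : ∀ δ > 0, entropy p a ≤ tiltedEntropy (digitVal p) (a - δ) t := fun δ hδ =>
    (ciInf_le ⟨0, forall_mem_range.2 fun δ => limsup_log_hcount_div_nonneg hp ha δ.2.le⟩
      (⟨δ, hδ⟩ : {δ : ℝ // 0 < δ})).trans (limsup_le_of_le
        (isBoundedUnder_ge_log_hcount_div δ).isCoboundedUnder_le
        (.of_forall (log_hcount_div_le hp ha hδ.le ht)))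
  have hcont : Continuous fun δ => tiltedEntropy (digitVal p) (a - δ) t := by
    unfold tiltedEntropy
    fun_prop
  have hlim : Tendsto (fun δ => tiltedEntropy (digitVal p) (a - δ) t) (𝓝[>] 0)
      (𝓝 (tiltedEntropy (digitVal p) a t)) := by
    simpa using (hcont.tendsto 0).mono_left nhdsWithin_le_nhds
  exact ge_of_tendsto hlim (eventually_nhdsWithin_of_forall hδ)

lemma dimH_image_averageLevelSet_le_entropy (hp : 1 < p) (ha : a ≤ p - 1) :
    dimH (Real.ofDigits '' averageLevelSet (digitVal p) a) ≤ ENNReal.ofReal (entropy p a) := by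
  have hlog : 0 < Real.log p := Real.log_pos (by exact_mod_cast hp)
  refine le_ofReal_of_forall_nnreal fun d hd => ?_
  obtain ⟨⟨δ, hδ⟩, hlimsup⟩ := exists_lt_of_ciInf_lt hd
  refine dimH_image_ofDigits_le hp
    (W := fun n => {w | |∑ i, digitVal p (w i) - n * a| < n * δ}) (fun ω hω => ?_) ?_
  · filter_upwards [eventually_abs_sum_sub_lt hω hδ] with n hn
    simpa [Fin.sum_univ_eq_sum_range (fun i => digitVal p (ω i))] using hn
  · filter_upwards [eventually_lt_of_limsup_lt hlimsup
      (isBoundedUnder_le_log_hcount_div hp ha hδ.le), eventually_gt_atTop 0] with n hn hn0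
    rw [← hcount_eq_ncard, natCast_rpow_eq_ofReal_exp (by omega), ← ENNReal.ofReal_natCast]
    refine ENNReal.ofReal_le_ofReal ((Real.le_exp_log _).trans (Real.exp_le_exp.2 ?_))
    rw [div_lt_iff₀ (by positivity)] at hn
    linarith

lemma tendsto_tiltedEntropy_digitVal [NeZero p] :
    Tendsto (tiltedEntropy (digitVal p) (p - 1)) atTop (𝓝 0) := by
  rw [← zero_div (Real.log p), ← digitVal_top]
  refine (tendsto_pressure_sub _ fun k hk => ?_).div_const _
  exact_mod_cast lt_top_iff_ne_top.2 hk

lemma entropy_sub_one (hp : 1 < p) : entropy p (p - 1) = 0 := by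
  have : NeZero p := ⟨by omega⟩
  exact le_antisymm (ge_of_tendsto tendsto_tiltedEntropy_digitVal ((eventually_ge_atTop 0).mono
    fun t ht => entropy_le_tiltedEntropy hp le_rfl ht)) (entropy_nonneg hp le_rfl)

lemma dimH_besicovitchLower_sub_one (hp : 1 < p) : dimH (besicovitchLower p (p - 1)) = 0 := by
  have : NeZero p := ⟨by omega⟩
  have hlim := ENNReal.tendsto_ofReal (tendsto_tiltedEntropy_digitVal (p := p))
  rw [ENNReal.ofReal_zero] at hlim
  exact le_antisymm (ge_of_tendsto hlim ((eventually_ge_atTop 0).mono fun t ht =>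
    dimH_besicovitchLower_le hp _ ht)) zero_le

end Entropy

/-- For an integer `p ≥ 2` and `0 ≤ α ≤ p-1`,
`dim_H E̲(α) = 1` if `α < (p-1)/2`, and `dim_H E̲(α) = h(α)` if `(p-1)/2 ≤ α`. -/
theorem dimH_besicovitchLower (p : ℕ) (hp : 2 ≤ p) (α : ℝ)
    (hα : 0 ≤ α) (hα' : α ≤ (p : ℝ) - 1) :
    (α < ((p : ℝ) - 1) / 2 → dimH (besicovitchLower p α) = 1) ∧
    (((p : ℝ) - 1) / 2 ≤ α →
      dimH (besicovitchLower p α) = ENNReal.ofReal (entropy p α)) := by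
  have : NeZero p := ⟨by omega⟩
  have hp' : (2 : ℝ) ≤ p := by exact_mod_cast hp
  refine ⟨fun hlt => ?_, fun hge => ?_⟩
  · refine le_antisymm ((dimH_mono (subset_univ _)).trans_eq Real.dimH_univ) ?_
    calc (1 : ℝ≥0∞)
        = ENNReal.ofReal (tiltedEntropy (digitVal p) (gibbsMean (digitVal p) 0) 0) := by
          rw [tiltedEntropy_zero _ hp, ENNReal.ofReal_one]
      _ ≤ dimH (besicovitchLower p (gibbsMean (digitVal p) 0)) :=
          le_dimH_besicovitchLower hp (by rw [gibbsMean_digitVal_zero]; linarith)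
      _ ≤ dimH (besicovitchLower p α) := dimH_mono fun x hx =>
          ⟨hx.1, hlt.le.trans (gibbsMean_digitVal_zero.ge.trans hx.2)⟩
  · rcases hα'.lt_or_eq with hlt | rfl
    · obtain ⟨t, ht, rfl⟩ := exists_gibbsMean_eq (digitVal p)
        (gibbsMean_digitVal_zero.trans_le hge) (hlt.trans_eq digitVal_top.symm)
      refine le_antisymm ?_ ?_
      · exact (dimH_besicovitchLower_le hp _ ht).trans ((le_dimH_image_averageLevelSet _ hp t).trans
          (dimH_image_averageLevelSet_le_entropy hp hα'))
      · exact (ENNReal.ofReal_le_ofReal (entropy_le_tiltedEntropy hp hα' ht)).trans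
          (le_dimH_besicovitchLower hp (by linarith))
    · rw [dimH_besicovitchLower_sub_one hp, entropy_sub_one hp, ENNReal.ofReal_zero]
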